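/- Among all complete k-partite graphs on n vertices, the number of 5-cycle subgraphs is maximized when the part sizes are as equal as possible (each part has size ⌊n/k⌋ or ⌈n/k⌉). -/

import Mathlib

/-- The number of (not necessarily induced) subgraphs of `G` isomorphic to the 5-cycle. -/
noncomputable def nuC5 {V : Type*} (G : SimpleGraph V) : ℕ :=
  Nat.card {H : G.Subgraph // Nonempty (H.coe ≃g SimpleGraph.cycleGraph 5)}

/-!
Labelled copies of `F` in a complete multipartite graph are counted by summing, over the proper
colourings of `F` by parts, a product of descending factorials of the part sizes. Suppose that
independent sets of `F` have at most two vertices, as for the 5-cycle. Then moving one vertex from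
part `a` to a part `b` that has become no larger without it does not decrease the count. Only copies
that use this vertex matter; let it be the image of `i`, coloured `a`. If no neighbour of `i` has
colour `b`, recolour `i` alone, which leaves the rest of the copy in place. Otherwise swap `a` and
`b` throughout: apart from `i`, at most one vertex has colour `a` and at least one has colour `b`,
so in the swapped colouring the larger of the two parts receives at least as many vertices.
-/

open Finset SimpleGraph

section Copies

variable {V W : Type*} {G : SimpleGraph V} {F : SimpleGraph W}

theorem toSubgraph_coeCopy_comp_toCopy (G' : G.Subgraph) (e : F ≃g G'.coe) :
    (G'.coeCopy.comp e.toCopy).toSubgraph = G' := by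
  change Subgraph.map (G'.hom.comp e.toHom) ⊤ = G'
  simp [Subgraph.map_comp]

/-- A labelled copy of `F` in `G` amounts to its image together with an isomorphism from `F` onto
that image. -/
noncomputable def copyEquivSigmaIso : F.Copy G ≃ Σ G' : G.Subgraph, (F ≃g G'.coe) where
  toFun f := ⟨f.toSubgraph, f.isoToSubgraph⟩
  invFun z := z.1.coeCopy.comp z.2.toCopy
  left_inv _ := rfl
  right_inv := by
    have inj : Function.Injective
        fun z : Σ G' : G.Subgraph, (F ≃g G'.coe) ↦ z.1.coeCopy.comp z.2.toCopy := by
      rintro ⟨G₁, e₁⟩ ⟨G₂, e₂⟩ h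
      obtain rfl : G₁ = G₂ := by
        simpa only [toSubgraph_coeCopy_comp_toCopy] using congrArg Copy.toSubgraph h
      congr
      ext i
      exact DFunLike.congr_fun h i
    exact Function.rightInverse_of_injective_of_leftInverse inj fun _ ↦ rfl

theorem labelledCopyCount_eq_natCard [Fintype V] [Fintype W] :
    G.labelledCopyCount F = Nat.card (F.Copy G) := by
  classical
  rw [labelledCopyCount, ← Nat.card_eq_fintype_card]

theorem labelledCopyCount_eq_copyCount_mul_card_iso [Fintype V] [Fintype W] :
    G.labelledCopyCount F = G.copyCount F * Nat.card (F ≃g F) := by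
  classical
  have card_iso (G' : G.Subgraph) : Nat.card (F ≃g G'.coe) =
      if Nonempty (F ≃g G'.coe) then Nat.card (F ≃g F) else 0 := by
    split_ifs with h
    · obtain ⟨e⟩ := h
      exact Nat.card_congr ⟨fun f ↦ f.trans e.symm, fun f ↦ f.trans e,
        fun f ↦ by ext; simp, fun f ↦ by ext; simp⟩
    · have := not_nonempty_iff.1 h
      exact Nat.card_of_isEmpty
  have (G' : G.Subgraph) : Finite (F ≃g G'.coe) := .of_injective _ DFunLike.coe_injective
  rw [labelledCopyCount_eq_natCard, Nat.card_congr copyEquivSigmaIso, Nat.card_sigma,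
    sum_congr rfl fun G' _ ↦ card_iso G', ← sum_filter, sum_const, smul_eq_mul, copyCount]

theorem copyCount_le_copyCount_of_labelledCopyCount_le {V' : Type*} {G' : SimpleGraph V'}
    [Fintype V] [Fintype V'] [Fintype W]
    (h : G.labelledCopyCount F ≤ G'.labelledCopyCount F) : G.copyCount F ≤ G'.copyCount F := by
  have : Finite (F ≃g F) := .of_injective _ DFunLike.coe_injective
  have : Nonempty (F ≃g F) := ⟨.refl⟩
  simp only [labelledCopyCount_eq_copyCount_mul_card_iso] at h
  exact Nat.le_of_mul_le_mul_right h Nat.card_pos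

theorem nuC5_eq_copyCount [Fintype V] (G : SimpleGraph V) :
    nuC5 G = G.copyCount (cycleGraph 5) := by
  classical
  have symm_iff (H : G.Subgraph) :
      Nonempty (H.coe ≃g cycleGraph 5) ↔ Nonempty (cycleGraph 5 ≃g H.coe) :=
    ⟨fun ⟨e⟩ ↦ ⟨e.symm⟩, fun ⟨e⟩ ↦ ⟨e.symm⟩⟩
  rw [nuC5, copyCount, Nat.card_congr (Equiv.subtypeEquivRight symm_iff), Nat.card_eq_fintype_card,
    Fintype.card_subtype]

end Copies

section DescFactorial

theorem succ_descFactorial_eq_add (p m : ℕ) :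
    (p + 1).descFactorial m = p.descFactorial m + m * p.descFactorial (m - 1) := by
  cases m with
  | zero => simp
  | succ m =>
    rw [Nat.succ_descFactorial_succ, Nat.descFactorial_succ, Nat.add_sub_cancel, ← add_mul]
    rcases le_or_gt m p with h | h
    · congr 1
      lia
    · simp [Nat.descFactorial_of_lt h]

theorem descFactorial_mul_descFactorial_le {p q m n : ℕ} (hqp : q ≤ p) (hmn : m ≤ n) :
    p.descFactorial m * q.descFactorial n ≤ p.descFactorial n * q.descFactorial m := by
  calc p.descFactorial m * q.descFactorial n
      = p.descFactorial m * ((q - m).descFactorial (n - m) * q.descFactorial m) := by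
        rw [Nat.descFactorial_mul_descFactorial hmn]
    _ ≤ p.descFactorial m * ((p - m).descFactorial (n - m) * q.descFactorial m) := by
        gcongr
    _ = p.descFactorial n * q.descFactorial m := by
        rw [← Nat.descFactorial_mul_descFactorial hmn]
        ring

end DescFactorial

section Placements

variable {ι W : Type*} [Fintype ι] [DecidableEq ι]

/-- The number of ways to choose distinct vertices for the elements of `s`, with `j ∈ s` going to
part `c j`, when part `t` consists of `x t` vertices. -/
def numPlacements (x : ι → ℕ) (c : W → ι) (s : Finset W) : ℕ :=
  ∏ t, (x t).descFactorial #{j ∈ s | c j = t}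

theorem numPlacements_congr (x : ι → ℕ) {c c' : W → ι} {s : Finset W} (h : ∀ j ∈ s, c j = c' j) :
    numPlacements x c s = numPlacements x c' s :=
  prod_congr rfl fun t _ ↦ by rw [filter_congr fun j hj ↦ by rw [h j hj]]

theorem numPlacements_add_single [DecidableEq W] (z : ι → ℕ) (c : W → ι) (s : Finset W) (a : ι) :
    numPlacements (z + Pi.single a 1) c s =
      numPlacements z c s + ∑ i ∈ s with c i = a, numPlacements z c (s.erase i) := by
  have erase_eq : ∀ i ∈ ({i ∈ s | c i = a} : Finset W), numPlacements z c (s.erase i) =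
      (z a).descFactorial (#{j ∈ s | c j = a} - 1) *
        ∏ t ∈ univ.erase a, (z t).descFactorial #{j ∈ s | c j = t} := by
    intro i hi
    rw [numPlacements, ← mul_prod_erase univ _ (mem_univ a), filter_erase, card_erase_of_mem hi]
    congr 1
    refine prod_congr rfl fun t ht ↦ ?_
    rw [filter_erase, erase_eq_of_notMem]
    simp only [mem_filter] at hi ⊢
    exact fun h ↦ ne_of_mem_erase ht (h.2.symm.trans hi.2)
  have off_a :
      ∏ t ∈ univ.erase a, ((z + Pi.single a 1 : ι → ℕ) t).descFactorial #{j ∈ s | c j = t} =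
        ∏ t ∈ univ.erase a, (z t).descFactorial #{j ∈ s | c j = t} :=
    prod_congr rfl fun t ht ↦ by simp [ne_of_mem_erase ht]
  rw [sum_congr rfl erase_eq, sum_const, smul_eq_mul]
  simp only [numPlacements, ← mul_prod_erase univ _ (mem_univ a)]
  rw [off_a, Pi.add_apply, Pi.single_eq_same, succ_descFactorial_eq_add]
  ring

theorem numPlacements_le_numPlacements_swap {z : ι → ℕ} {c : W → ι} {s : Finset W} {a b : ι}
    (hab : a ≠ b) (hz : z b ≤ z a) (hc : #{j ∈ s | c j = a} ≤ #{j ∈ s | c j = b}) :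
    numPlacements z c s ≤ numPlacements z (Equiv.swap a b ∘ c) s := by
  have card_swap (t : ι) : #{j ∈ s | (Equiv.swap a b ∘ c) j = t} =
      #{j ∈ s | c j = Equiv.swap a b t} := by
    simp only [Function.comp_apply, Equiv.swap_apply_eq_iff]
  have split (f : ι → ℕ) : ∏ t, f t = f a * f b * ∏ t ∈ {a, b}ᶜ, f t := by
    rw [← prod_pair hab, prod_mul_prod_compl]
  have off_ab : ∏ t ∈ {a, b}ᶜ, (z t).descFactorial #{j ∈ s | c j = Equiv.swap a b t} =
      ∏ t ∈ {a, b}ᶜ, (z t).descFactorial #{j ∈ s | c j = t} := by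
    refine prod_congr rfl fun t ht ↦ ?_
    simp only [mem_compl, mem_insert, mem_singleton, not_or] at ht
    rw [Equiv.swap_apply_of_ne_of_ne ht.1 ht.2]
  simp only [numPlacements, card_swap, split, off_ab, Equiv.swap_apply_left,
    Equiv.swap_apply_right]
  exact Nat.mul_le_mul_right _ (descFactorial_mul_descFactorial_le hz hc)

end Placements

section MultipartiteCopies

variable {ι W : Type*} {F : SimpleGraph W} {V : ι → Type*}

/-- An embedding that sends `i` into the fibre of `π` over `c i`, for all `i`, amounts to one
embedding between corresponding fibres of `c` and `π` for each `t`. -/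
def embeddingOverEquivPi {X : Type*} (π : X → ι) (c : W → ι) :
    {f : W ↪ X // ∀ i, π (f i) = c i} ≃ ∀ t, {i // c i = t} ↪ {v // π v = t} where
  toFun f t := ⟨fun i ↦ ⟨f.1 i, (f.2 i).trans i.2⟩, fun i j h ↦
    Subtype.ext (f.1.injective (congrArg Subtype.val h))⟩
  invFun g := ⟨⟨fun i ↦ g (c i) ⟨i, rfl⟩, fun i j h ↦ by
    have hc : c i = c j := (g _ _).2.symm.trans ((congrArg π h).trans (g _ _).2)
    have hg (t : ι) (hi : c i = t) : (g (c i) ⟨i, rfl⟩ : X) = g t ⟨i, hi⟩ := by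
      subst hi
      rfl
    exact congrArg Subtype.val ((g _).injective (Subtype.ext ((hg _ hc).symm.trans h)))⟩,
    fun i ↦ (g _ _).2⟩
  left_inv _ := rfl
  right_inv g := by
    funext t
    ext ⟨i, rfl⟩ : 2
    rfl

/-- A labelled copy of `F` in a complete multipartite graph amounts to the proper colouring of `F`
by parts that it induces together with an embedding of the vertices respecting that colouring. -/
def copyCompleteMultipartiteEquiv : F.Copy (completeMultipartiteGraph V) ≃
    Σ c : F.Coloring ι, {f : W ↪ Σ t, V t // ∀ i, (f i).1 = c i} where
  toFun f := ⟨.mk (fun i ↦ (f i).1) f.toHom.map_adj, f.toEmbedding, fun _ ↦ rfl⟩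
  invFun z := ⟨⟨z.2.1, fun {i j} h ↦ by simpa [z.2.2] using z.1.valid h⟩, z.2.1.injective⟩
  left_inv _ := rfl
  right_inv := by
    rintro ⟨⟨c, hc⟩, f, hf⟩
    obtain rfl : (fun i ↦ (f i).1) = c := funext hf
    rfl

theorem labelledCopyCount_completeMultipartiteGraph [Fintype ι] [DecidableEq ι] [Fintype W]
    [∀ t, Fintype (V t)] : (completeMultipartiteGraph V).labelledCopyCount F =
      ∑ c : F.Coloring ι, numPlacements (fun t ↦ Fintype.card (V t)) c univ := by
  classical
  have card_fiber (c : F.Coloring ι) : Nat.card {f : W ↪ Σ t, V t // ∀ i, (f i).1 = c i} =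
      numPlacements (fun t ↦ Fintype.card (V t)) c univ := by
    rw [Nat.card_congr (embeddingOverEquivPi Sigma.fst c), Nat.card_pi]
    refine prod_congr rfl fun t _ ↦ ?_
    rw [Nat.card_congr ((Equiv.refl _).embeddingCongr (Equiv.sigmaSubtype t)),
      Nat.card_eq_fintype_card, Fintype.card_embedding_eq, Fintype.card_subtype]
  calc (completeMultipartiteGraph V).labelledCopyCount F
      = Nat.card (F.Copy (completeMultipartiteGraph V)) := labelledCopyCount_eq_natCard
    _ = Nat.card (Σ c : F.Coloring ι, {f : W ↪ Σ t, V t // ∀ i, (f i).1 = c i}) :=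
        Nat.card_congr copyCompleteMultipartiteEquiv
    _ = ∑ c : F.Coloring ι, Nat.card {f : W ↪ Σ t, V t // ∀ i, (f i).1 = c i} :=
        Nat.card_sigma
    _ = _ := sum_congr rfl fun c _ ↦ card_fiber c

end MultipartiteCopies

theorem apply_le_apply_of_balanced {ι α : Type*} [Fintype ι] [DecidableEq ι] [Preorder α]
    {f : (ι → ℕ) → α}
    (hf : ∀ (z : ι → ℕ) a b, z b ≤ z a → f (z + Pi.single a 1) ≤ f (z + Pi.single b 1))
    {x y : ι → ℕ} (hxy : ∑ i, x i = ∑ i, y i) (hy : ∀ i j, y i ≤ y j + 1) : f x ≤ f y := by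
  induction hd : ∑ i, (x i - y i) using Nat.strong_induction_on generalizing x with | _ d ih
  subst hd
  by_cases hle : ∀ i, x i ≤ y i
  · have : x = y := funext fun i ↦ (sum_eq_sum_iff_of_le fun i _ ↦ hle i).1 hxy i (mem_univ i)
    rw [this]
  push Not at hle
  obtain ⟨a, ha⟩ := hle
  obtain ⟨b, hb⟩ : ∃ b, x b < y b := by
    by_contra! hge
    exact (sum_lt_sum (fun i _ ↦ hge i) ⟨a, mem_univ a, ha⟩).ne' hxy
  have hab : a ≠ b := by
    rintro rfl
    exact lt_asymm ha hb
  obtain ⟨z, rfl⟩ : ∃ z, x = z + Pi.single a 1 :=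
    ⟨x - Pi.single a 1, (tsub_add_cancel_of_le fun i ↦ by grind).symm⟩
  simp only [Pi.add_apply, Pi.single_eq_same, Pi.single_eq_of_ne hab.symm, add_zero] at ha hb
  have hz : z b ≤ z a := by
    have := hy b a
    lia
  have excess_lt : ∑ i, ((z + Pi.single b 1 : ι → ℕ) i - y i) <
      ∑ i, ((z + Pi.single a 1 : ι → ℕ) i - y i) := by
    refine sum_lt_sum (fun i _ ↦ ?_) ⟨a, mem_univ a, ?_⟩
    · rcases eq_or_ne i b with rfl | hib
      · simp [Nat.sub_eq_zero_of_le hb]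
      · simp only [Pi.add_apply, Pi.single_eq_of_ne hib]
        lia
    · simp only [Pi.add_apply, Pi.single_eq_same, Pi.single_eq_of_ne hab]
      lia
  have hsum : ∑ i, (z + Pi.single b 1 : ι → ℕ) i = ∑ i, y i := by
    rw [← hxy]
    simp [sum_add_distrib]
  exact (hf z a b hz).trans (ih _ excess_lt hsum rfl)

section Colorings

variable {ι W : Type*} {F : SimpleGraph W}

/-- The colouring obtained from `c` by giving vertex `i` the colour `b`, which none of its
neighbours has. -/
def recolorVertex [DecidableEq W] (c : F.Coloring ι) (i : W) (b : ι)
    (h : ∀ j, F.Adj i j → c j ≠ b) : F.Coloring ι :=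
  .mk (Function.update c i b) fun {u v} huv ↦ by
    by_cases hu : u = i
    · subst hu
      simpa [huv.ne'] using (h v huv).symm
    by_cases hv : v = i
    · subst hv
      simpa [hu] using h u huv.symm
    · simpa [hu, hv] using c.valid huv

@[simp]
theorem coe_recolorVertex [DecidableEq W] (c : F.Coloring ι) (i : W) (b : ι)
    (h : ∀ j, F.Adj i j → c j ≠ b) : ⇑(recolorVertex c i b h) = Function.update c i b := rfl

theorem card_colorClass_lt_of_indepSetFree [DecidableEq ι] [Fintype W] {n : ℕ}
    (hF : F.IndepSetFree n) (c : F.Coloring ι) (a : ι) : #{j | c j = a} < n := by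
  by_contra! hn
  obtain ⟨t, ht, htn⟩ := exists_subset_card_eq hn
  refine hF t ⟨fun u hu v hv _ huv ↦ c.valid huv ?_, htn⟩
  rw [(mem_filter.1 (ht hu)).2, (mem_filter.1 (ht hv)).2]

variable [Fintype ι] [DecidableEq ι] [Fintype W] [DecidableEq W]

theorem numPlacements_erase_le_recolorOfEquiv_swap (hF : F.IndepSetFree 3) {z : ι → ℕ} {a b : ι}
    (hab : a ≠ b) (hz : z b ≤ z a) {c : F.Coloring ι} {i j : W} (hi : c i = a) (hj : c j = b) :
    numPlacements z c (univ.erase i) ≤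
      numPlacements z (F.recolorOfEquiv (Equiv.swap a b) c) (univ.erase i) := by
  refine numPlacements_le_numPlacements_swap hab hz ?_
  have hji : j ≠ i := by
    rintro rfl
    exact hab (hi.symm.trans hj)
  calc #{u ∈ univ.erase i | c u = a}
      = #{u | c u = a} - 1 := by rw [filter_erase, card_erase_of_mem (by simpa)]
    _ ≤ 1 := Nat.sub_le_of_le_add (Nat.le_of_lt_succ (card_colorClass_lt_of_indepSetFree hF c a))
    _ ≤ #{u ∈ univ.erase i | c u = b} := card_pos.2 ⟨j, by simp [hji, hj]⟩

variable [DecidableRel F.Adj]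

theorem sum_numPlacements_recolorVertex (z : ι → ℕ) (i : W) (a b : ι) :
    ∑ c : F.Coloring ι with c i = a ∧ ∀ j, F.Adj i j → c j ≠ b, numPlacements z c (univ.erase i) =
    ∑ c : F.Coloring ι with c i = b ∧ ∀ j, F.Adj i j → c j ≠ a,
      numPlacements z c (univ.erase i) := by
  let S (a b : ι) : Finset (F.Coloring ι) := {c | c i = a ∧ ∀ j, F.Adj i j → c j ≠ b}
  have of_mem_S {a b : ι} {c : F.Coloring ι} (hc : c ∈ S a b) :
      c i = a ∧ ∀ j, F.Adj i j → c j ≠ b := (mem_filter.1 hc).2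
  have recolorVertex_mem_S {a b : ι} {c : F.Coloring ι} (hc : c ∈ S a b) :
      recolorVertex c i b (of_mem_S hc).2 ∈ S b a := by
    simp only [S, mem_filter, mem_univ, true_and, coe_recolorVertex, Function.update_self]
    intro j hij
    rw [Function.update_of_ne hij.ne', ← (of_mem_S hc).1]
    exact (c.valid hij).symm
  have recolorVertex_back {a b : ι} {c : F.Coloring ι} (hc : c ∈ S a b) :
      recolorVertex (recolorVertex c i b (of_mem_S hc).2) i a
        (of_mem_S (recolorVertex_mem_S hc)).2 = c := by
    refine DFunLike.coe_injective ?_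
    rw [coe_recolorVertex, coe_recolorVertex, Function.update_idem, ← (of_mem_S hc).1,
      Function.update_eq_self]
  refine sum_bij' (s := S a b) (t := S b a) (fun c hc ↦ recolorVertex c i b (of_mem_S hc).2)
    (fun c hc ↦ recolorVertex c i a (of_mem_S hc).2) (fun _ ↦ recolorVertex_mem_S)
    (fun _ ↦ recolorVertex_mem_S) (fun _ ↦ recolorVertex_back) (fun _ ↦ recolorVertex_back)
    fun c _ ↦ numPlacements_congr z fun j hj ↦ ?_
  rw [coe_recolorVertex, Function.update_of_ne (ne_of_mem_erase hj)]

theorem sum_numPlacements_swap_le (hF : F.IndepSetFree 3) {z : ι → ℕ} {a b : ι}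
    (hab : a ≠ b) (hz : z b ≤ z a) (i : W) :
    ∑ c : F.Coloring ι with c i = a ∧ ¬ ∀ j, F.Adj i j → c j ≠ b,
      numPlacements z c (univ.erase i) ≤
    ∑ c : F.Coloring ι with c i = b ∧ ¬ ∀ j, F.Adj i j → c j ≠ a,
      numPlacements z c (univ.erase i) := by
  calc
    _ ≤ ∑ c : F.Coloring ι with c i = a ∧ ¬ ∀ j, F.Adj i j → c j ≠ b,
        numPlacements z (F.recolorOfEquiv (Equiv.swap a b) c) (univ.erase i) := by
      refine sum_le_sum fun c hc ↦ ?_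
      simp only [mem_filter, mem_univ, true_and, not_forall, not_ne_iff] at hc
      obtain ⟨hi, j, -, hj⟩ := hc
      exact numPlacements_erase_le_recolorOfEquiv_swap hF hab hz hi hj
    _ = _ := by
      refine sum_equiv (F.recolorOfEquiv (Equiv.swap a b)) (fun c ↦ ?_) fun _ _ ↦ rfl
      simp [Equiv.swap_apply_eq_iff]

end Colorings

theorem sum_numPlacements_add_single_le {ι W : Type*} [Fintype ι] [DecidableEq ι] [Fintype W]
    {F : SimpleGraph W} (hF : F.IndepSetFree 3) (z : ι → ℕ) (a b : ι) (hz : z b ≤ z a) :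
    ∑ c : F.Coloring ι, numPlacements (z + Pi.single a 1) c univ ≤
      ∑ c : F.Coloring ι, numPlacements (z + Pi.single b 1) c univ := by
  classical
  rcases eq_or_ne a b with rfl | hab
  · rfl
  simp only [numPlacements_add_single, sum_add_distrib]
  gcongr 1
  simp only [sum_filter, sum_comm (s := (univ : Finset (F.Coloring ι)))]
  refine sum_le_sum fun i _ ↦ ?_
  simp only [← sum_filter]
  rw [← sum_filter_add_sum_filter_not _ (fun c : F.Coloring ι ↦ ∀ j, F.Adj i j → c j ≠ b),
    ← sum_filter_add_sum_filter_not (filter (fun c : F.Coloring ι ↦ c i = b) _)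
      (fun c : F.Coloring ι ↦ ∀ j, F.Adj i j → c j ≠ a)]
  simp only [filter_filter]
  exact add_le_add (sum_numPlacements_recolorVertex z i a b).le
    (sum_numPlacements_swap_le hF hab hz i)

theorem indepSetFree_cycleGraph_five : (cycleGraph 5).IndepSetFree 3 := by
  unfold IndepSetFree
  simp only [isNIndepSet_iff, IsIndepSet]
  decide

theorem stmt_11_general {ι W : Type*} [Fintype ι] [Finite W] {F : SimpleGraph W}
    (hF : F.IndepSetFree 3) {V V' : ι → Type*} [∀ t, Fintype (V t)] [∀ t, Fintype (V' t)]
    (hcard : ∑ t, Fintype.card (V t) = ∑ t, Fintype.card (V' t))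
    (hbal : ∀ s t, Fintype.card (V' s) ≤ Fintype.card (V' t) + 1) :
    (completeMultipartiteGraph V).copyCount F ≤ (completeMultipartiteGraph V').copyCount F := by
  classical
  have := Fintype.ofFinite W
  refine copyCount_le_copyCount_of_labelledCopyCount_le ?_
  simp only [labelledCopyCount_completeMultipartiteGraph]
  exact apply_le_apply_of_balanced
    (f := fun x ↦ ∑ c : F.Coloring ι, numPlacements x c univ)
    (sum_numPlacements_add_single_le hF) hcard hbal

theorem stmt_11 (k n : ℕ) (x : Fin k → ℕ) (hx : ∑ i, x i = n)
    (y : Fin k → ℕ) (hy : ∑ i, y i = n) (hbal : ∀ i j, y i ≤ y j + 1) :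
    nuC5 (SimpleGraph.completeMultipartiteGraph (fun t => Fin (x t))) ≤
      nuC5 (SimpleGraph.completeMultipartiteGraph (fun t => Fin (y t))) := by
  simpa only [nuC5_eq_copyCount] using
    stmt_11_general indepSetFree_cycleGraph_five (by simp [hx, hy]) (by simpa using hbal)
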